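/- arXiv:2202.10506 — 8 statements merged into one kernel-verified Lean document; each statement's English description precedes it below -/
import Mathlib

section
/- Let n ≥ 1 and define H : ℝ_{>0}^n → ℝ by H(z) = Σ_a z_a log z_a − z̄ log z̄, where z̄ = Σ_a z_a, whose gradient is ∇H(z)_a = log(z_a/z̄). Then for all z₁, z₂ ∈ ℝ_{>0}^n one has (z₁ − z₂) · (∇H(z₁) − ∇H(z₂)) ≥ 0, i.e. Σ_a (z₁ₐ − z₂ₐ)(log(z₁ₐ/z̄₁) − log(z₂ₐ/z̄₂)) ≥ 0, and equality holds if and only if z₂ = c z₁ for some real c > 0. -/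
/-!
Write `S`, `T` for the sums of `z₁`, `z₂` and `p = z₁ / S`, `q = z₂ / T` for the normalizations.
The sum equals `S · KL(p‖q) + T · KL(q‖p)`. Since `p` and `q` both have total mass one, each
divergence is a sum of terms `x (log x - log y) - x + y`, which are nonnegative and vanish only for
`x = y` (`klTerm_nonneg`, `klTerm_pos`). Hence the sum is nonnegative, and it vanishes exactly when
`p = q`, that is, when `z₂ = (T / S) z₁`.
-/

/-- The summand of the generalized Kullback–Leibler divergence between positive vectors. -/
noncomputable def klTerm (x y : ℝ) : ℝ := x * (Real.log x - Real.log y) - x + y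

lemma klTerm_pos {x y : ℝ} (hx : 0 < x) (hy : 0 < y) (hxy : x ≠ y) : 0 < klTerm x y := by
  -- This is `log (y / x) < y / x - 1`, multiplied by `x`.
  have h := Real.log_lt_sub_one_of_pos (div_pos hy hx)
    (fun h => hxy ((div_eq_one_iff_eq hx.ne').1 h).symm)
  rw [Real.log_div hy.ne' hx.ne'] at h
  have h' := mul_lt_mul_of_pos_left h hx
  have e : x * (y / x - 1) = y - x := by field_simp
  unfold klTerm
  linarith

lemma klTerm_nonneg {x y : ℝ} (hx : 0 < x) (hy : 0 < y) : 0 ≤ klTerm x y := by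
  rcases eq_or_ne x y with rfl | h
  · simp [klTerm]
  · exact (klTerm_pos hx hy h).le

/-- Monotonicity of the gradient of H(z) = Σ_a z_a log z_a − z̄ log z̄:
for z₁, z₂ in the positive orthant,
Σ_a (z₁ₐ − z₂ₐ)(log(z₁ₐ/z̄₁) − log(z₂ₐ/z̄₂)) ≥ 0, with equality iff z₂ = c z₁, c > 0. -/
theorem statement_1 (n : ℕ) (hn : 1 ≤ n) (z₁ z₂ : Fin n → ℝ)
    (h₁ : ∀ a, 0 < z₁ a) (h₂ : ∀ a, 0 < z₂ a) :
    0 ≤ ∑ a, (z₁ a - z₂ a) *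
        (Real.log (z₁ a / ∑ b, z₁ b) - Real.log (z₂ a / ∑ b, z₂ b)) ∧
    ((∑ a, (z₁ a - z₂ a) *
        (Real.log (z₁ a / ∑ b, z₁ b) - Real.log (z₂ a / ∑ b, z₂ b))) = 0 ↔
      ∃ c : ℝ, 0 < c ∧ z₂ = c • z₁) := by
  have hne : (Finset.univ : Finset (Fin n)).Nonempty := ⟨⟨0, hn⟩, Finset.mem_univ _⟩
  have hS : 0 < ∑ b, z₁ b := Finset.sum_pos (fun a _ => h₁ a) hne
  have hT : 0 < ∑ b, z₂ b := Finset.sum_pos (fun a _ => h₂ a) hne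
  have hp1 : ∑ a, z₁ a / ∑ b, z₁ b = 1 := by rw [← Finset.sum_div, div_self hS.ne']
  have hq1 : ∑ a, z₂ a / ∑ b, z₂ b = 1 := by rw [← Finset.sum_div, div_self hT.ne']
  have hTS : ∀ c : ℝ, z₂ = c • z₁ → ∑ b, z₂ b = c * ∑ b, z₁ b := by
    rintro c rfl
    simp [Finset.mul_sum]
  generalize ∑ b, z₁ b = S at *
  generalize ∑ b, z₂ b = T at *
  have hp : ∀ a, 0 < z₁ a / S := fun a => div_pos (h₁ a) hS
  have hq : ∀ a, 0 < z₂ a / T := fun a => div_pos (h₂ a) hT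
  have key : ∑ a, (z₁ a - z₂ a) * (Real.log (z₁ a / S) - Real.log (z₂ a / T)) =
      ∑ a, (S * klTerm (z₁ a / S) (z₂ a / T) + T * klTerm (z₂ a / T) (z₁ a / S)) := by
    -- The linear corrections add up to `(S - T) * (∑ p - ∑ q) = 0`.
    have h0 : ∑ a, (S - T) * (z₁ a / S - z₂ a / T) = 0 := by
      rw [← Finset.mul_sum, Finset.sum_sub_distrib, hp1, hq1]
      ring
    rw [← sub_zero (∑ a, (z₁ a - z₂ a) * _), ← h0, ← Finset.sum_sub_distrib]
    refine Finset.sum_congr rfl fun a _ => ?_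
    have e1 : z₁ a = S * (z₁ a / S) := by field_simp
    have e2 : z₂ a = T * (z₂ a / T) := by field_simp
    unfold klTerm
    linear_combination (Real.log (z₁ a / S) - Real.log (z₂ a / T)) * (e1 - e2)
  have hnn : ∀ a ∈ (Finset.univ : Finset (Fin n)),
      0 ≤ S * klTerm (z₁ a / S) (z₂ a / T) + T * klTerm (z₂ a / T) (z₁ a / S) := fun a _ =>
    add_nonneg (mul_nonneg hS.le (klTerm_nonneg (hp a) (hq a)))
      (mul_nonneg hT.le (klTerm_nonneg (hq a) (hp a)))
  rw [key]
  refine ⟨Finset.sum_nonneg hnn, ?_⟩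
  rw [Finset.sum_eq_zero_iff_of_nonneg hnn]
  constructor
  · intro h
    refine ⟨T / S, div_pos hT hS, funext fun a => ?_⟩
    have hpq : z₁ a / S = z₂ a / T := by
      by_contra hc
      have := h a (Finset.mem_univ a)
      have := mul_pos hS (klTerm_pos (hp a) (hq a) hc)
      have := mul_nonneg hT.le (klTerm_nonneg (hq a) (hp a))
      linarith
    have e2 : z₂ a = T * (z₂ a / T) := by field_simp
    rw [Pi.smul_apply, smul_eq_mul, e2, ← hpq]
    ring
  · rintro ⟨c, hc, hz⟩ a -
    have hpq : z₂ a / T = z₁ a / S := by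
      rw [hTS c hz, hz, Pi.smul_apply, smul_eq_mul, mul_div_mul_left _ _ hc.ne']
    simp [klTerm, hpq]
end

section
/- Let S and A be nonempty finite sets and let u, u* ∈ ℝ^{S×A} have all entries strictly positive. Then Σ_{s∈S, a∈A} (u_{sa} − u*_{sa}) (log(u_{sa}/ũ_s) − log(u*_{sa}/ũ*_s)) ≥ 0, where ũ_s = Σ_a u_{sa} and ũ*_s = Σ_a u*_{sa}; equality holds if and only if for every s ∈ S there exists c_s > 0 with u_{sa} = c_s u*_{sa} for all a ∈ A. -/
/-! Fix a state `s` and normalise the rows to probability vectors `p = u / ũ`, `q = u* / ũ*`.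
The inner sum is `ũ · KL(p ‖ q) + ũ* · KL(q ‖ p)`. Since `p` and `q` both have total mass one,
each divergence can be written as a sum of the terms `p (log p - log q) - (p - q)`, which are
nonnegative and vanish only when `p = q` (`gibbs_le`, `gibbs_eq`, from `log x ≤ x - 1`).
Hence every row contributes a nonnegative amount, which is zero exactly when `p = q`, i.e. when
the rows of `u` and `u*` are proportional. -/

theorem gibbs_le {p q : ℝ} (hp : 0 < p) (hq : 0 < q) :
    0 ≤ p * (Real.log p - Real.log q) - (p - q) := by
  have h := Real.log_le_sub_one_of_pos (div_pos hq hp)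
  rw [Real.log_div hq.ne' hp.ne'] at h
  have h2 := mul_le_mul_of_nonneg_left h hp.le
  have h3 : p * (q / p - 1) = q - p := by field_simp
  linarith

theorem gibbs_eq {p q : ℝ} (hp : 0 < p) (hq : 0 < q)
    (h0 : p * (Real.log p - Real.log q) - (p - q) = 0) : p = q := by
  by_contra hne
  have h1 : q / p ≠ 1 := fun h => hne ((div_eq_one_iff_eq hp.ne').1 h).symm
  have h := Real.log_lt_sub_one_of_pos (div_pos hq hp) h1
  rw [Real.log_div hq.ne' hp.ne'] at h
  have h2 := mul_lt_mul_of_pos_left h hp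
  have h3 : p * (q / p - 1) = q - p := by field_simp
  linarith

/-- The contribution of a single state, with the equality case. -/
theorem row_ineq {A : Type*} [Fintype A] [Nonempty A] (u v : A → ℝ)
    (hu : ∀ a, 0 < u a) (hv : ∀ a, 0 < v a) :
    0 ≤ ∑ a, (u a - v a) * (Real.log (u a / ∑ b, u b) - Real.log (v a / ∑ b, v b)) ∧
    ((∑ a, (u a - v a) * (Real.log (u a / ∑ b, u b) - Real.log (v a / ∑ b, v b))) = 0 ↔
      ∃ c : ℝ, 0 < c ∧ ∀ a, u a = c * v a) := by
  have hU : 0 < ∑ b, u b := Finset.sum_pos (fun a _ => hu a) Finset.univ_nonempty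
  have hV : 0 < ∑ b, v b := Finset.sum_pos (fun a _ => hv a) Finset.univ_nonempty
  have hc : ∀ c : ℝ, (∀ a, u a = c * v a) → ∑ b, u b = c * ∑ b, v b := by
    intro c h
    rw [Finset.mul_sum]
    exact Finset.sum_congr rfl fun a _ => h a
  have hpsum : ∑ a, u a / ∑ b, u b = 1 := by rw [← Finset.sum_div, div_self hU.ne']
  have hqsum : ∑ a, v a / ∑ b, v b = 1 := by rw [← Finset.sum_div, div_self hV.ne']
  generalize (∑ b, u b) = U at *
  generalize (∑ b, v b) = V at *
  have hp : ∀ a, 0 < u a / U := fun a => div_pos (hu a) hU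
  have hq : ∀ a, 0 < v a / V := fun a => div_pos (hv a) hV
  -- The linear corrections `(V - U) * (p - q)` sum to zero because `p` and `q` both have mass one.
  have key : ∑ a, (u a - v a) * (Real.log (u a / U) - Real.log (v a / V)) =
      ∑ a, (U * (u a / U * (Real.log (u a / U) - Real.log (v a / V)) - (u a / U - v a / V)) +
        V * (v a / V * (Real.log (v a / V) - Real.log (u a / U)) - (v a / V - u a / U))) := by
    have h0 : ∑ a, (V - U) * (u a / U - v a / V) = 0 := by
      rw [← Finset.mul_sum, Finset.sum_sub_distrib, hpsum, hqsum]
      ring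
    rw [← add_zero (∑ a, (u a - v a) * _), ← h0, ← Finset.sum_add_distrib]
    refine Finset.sum_congr rfl fun a _ => ?_
    have e1 : U * (u a / U) = u a := mul_div_cancel₀ _ hU.ne'
    have e2 : V * (v a / V) = v a := mul_div_cancel₀ _ hV.ne'
    linear_combination (-(Real.log (u a / U) - Real.log (v a / V))) * e1 +
      (Real.log (u a / U) - Real.log (v a / V)) * e2
  have t1 : ∀ a, 0 ≤ U * (u a / U * (Real.log (u a / U) - Real.log (v a / V)) -
      (u a / U - v a / V)) := fun a => mul_nonneg hU.le (gibbs_le (hp a) (hq a))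
  have t2 : ∀ a, 0 ≤ V * (v a / V * (Real.log (v a / V) - Real.log (u a / U)) -
      (v a / V - u a / U)) := fun a => mul_nonneg hV.le (gibbs_le (hq a) (hp a))
  refine ⟨key ▸ Finset.sum_nonneg fun a _ => add_nonneg (t1 a) (t2 a), fun h => ?_, ?_⟩
  · rw [key, Finset.sum_eq_zero_iff_of_nonneg fun a _ => add_nonneg (t1 a) (t2 a)] at h
    refine ⟨U / V, div_pos hU hV, fun a => ?_⟩
    have h1 := ((add_eq_zero_iff_of_nonneg (t1 a) (t2 a)).1 (h a (Finset.mem_univ a))).1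
    have h2 := gibbs_eq (hp a) (hq a) ((mul_eq_zero.1 h1).resolve_left hU.ne')
    rw [div_eq_iff hU.ne'] at h2
    rw [h2]
    ring
  · rintro ⟨c, hc0, h⟩
    refine Finset.sum_eq_zero fun a _ => ?_
    rw [hc c h, h a, mul_div_mul_left _ _ hc0.ne', sub_self, mul_zero]

/-- For positive u, u* ∈ ℝ^{S×A},
Σ_{s,a} (u_{sa} − u*_{sa})(log(u_{sa}/ũ_s) − log(u*_{sa}/ũ*_s)) ≥ 0,
with equality iff for each s there is c_s > 0 with u_{sa} = c_s u*_{sa} for all a. -/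
theorem statement_2 (S A : Type*) [Fintype S] [Fintype A] [Nonempty S] [Nonempty A]
    (u ustar : S → A → ℝ) (hu : ∀ s a, 0 < u s a) (hustar : ∀ s a, 0 < ustar s a) :
    0 ≤ ∑ s, ∑ a, (u s a - ustar s a) *
        (Real.log (u s a / ∑ b, u s b) - Real.log (ustar s a / ∑ b, ustar s b)) ∧
    ((∑ s, ∑ a, (u s a - ustar s a) *
        (Real.log (u s a / ∑ b, u s b) - Real.log (ustar s a / ∑ b, ustar s b))) = 0 ↔
      ∀ s, ∃ c : ℝ, 0 < c ∧ ∀ a, u s a = c * ustar s a) := by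
  have row := fun s => row_ineq (u s) (ustar s) (hu s) (hustar s)
  refine ⟨Finset.sum_nonneg fun s _ => (row s).1, ?_⟩
  rw [Finset.sum_eq_zero_iff_of_nonneg fun s _ => (row s).1]
  exact ⟨fun h s => (row s).2.1 (h s (Finset.mem_univ s)), fun h s _ => (row s).2.2 (h s)⟩
end

section
/- Let S and A be nonempty finite sets, τ > 0, 0 < γ < 1, r ∈ ℝ^{S×A}, and for each a ∈ A let P_a be an |S|×|S| row-stochastic matrix. Define φ : ℝ^S → ℝ^S by φ(v)_s = τ log( Σ_{a∈A} exp( (r_{sa} + γ Σ_{s'} P_{ass'} v_{s'}) / τ ) ). Then φ is a γ-contraction in the supremum norm: for all v, w ∈ ℝ^S, max_s |φ(v)_s − φ(w)_s| ≤ γ · max_s |v_s − w_s|. -/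
/-!
The operator is monotone and shifts constants by a factor `γ`. If `v ≤ w + M` pointwise, then, the
rows of `P a` being probability vectors, every exponent for `v` exceeds the one for `w` by at most
`γ * M / τ`; the scaled log-sum-exp therefore grows by at most `γ * M` (`mul_log_sum_exp_le`).
Taking `M` to be the sup distance and exchanging `v` and `w` gives the two-sided bound.
-/

open Matrix

/-- The scaled log-sum-exp is monotone and commutes with adding a constant to all arguments. -/
lemma mul_log_sum_exp_le {A : Type*} [Fintype A] [Nonempty A] {τ c : ℝ} (hτ : 0 < τ)
    {x y : A → ℝ} (h : ∀ a, x a ≤ y a + c) :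
    τ * Real.log (∑ a, Real.exp (x a / τ)) ≤ τ * Real.log (∑ a, Real.exp (y a / τ)) + c := by
  have hpos : ∀ z : A → ℝ, 0 < ∑ a, Real.exp (z a / τ) := fun z =>
    Finset.sum_pos (fun a _ => Real.exp_pos _) Finset.univ_nonempty
  have hle : ∑ a, Real.exp (x a / τ) ≤ (∑ a, Real.exp (y a / τ)) * Real.exp (c / τ) := by
    rw [Finset.sum_mul]
    refine Finset.sum_le_sum fun a _ => ?_
    rw [← Real.exp_add, ← add_div]
    exact Real.exp_le_exp.mpr (div_le_div_of_nonneg_right (h a) hτ.le)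
  have hlog := Real.log_le_log (hpos x) hle
  rw [Real.log_mul (hpos y).ne' (Real.exp_pos _).ne', Real.log_exp] at hlog
  calc τ * Real.log (∑ a, Real.exp (x a / τ))
      ≤ τ * (Real.log (∑ a, Real.exp (y a / τ)) + c / τ) :=
        mul_le_mul_of_nonneg_left hlog hτ.le
    _ = τ * Real.log (∑ a, Real.exp (y a / τ)) + c := by
        rw [mul_add, mul_div_cancel₀ _ hτ.ne']

/-- Averaging against a probability vector preserves a uniform upper bound on the difference. -/
lemma sum_mul_le_add_of_sum_eq_one {S : Type*} [Fintype S] {p v w : S → ℝ} {M : ℝ}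
    (hp : ∀ s, 0 ≤ p s) (hsum : ∑ s, p s = 1) (h : ∀ s, v s ≤ w s + M) :
    ∑ s, p s * v s ≤ ∑ s, p s * w s + M := by
  calc ∑ s, p s * v s ≤ ∑ s, p s * (w s + M) :=
        Finset.sum_le_sum fun s _ => mul_le_mul_of_nonneg_left (h s) (hp s)
    _ = ∑ s, p s * w s + M := by
        simp only [mul_add, Finset.sum_add_distrib, ← Finset.sum_mul, hsum, one_mul]

/-- The regularized Bellman operator
φ(v)_s = τ log( Σ_a exp((r_{sa} + γ Σ_{s'} P_{ass'} v_{s'})/τ) )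
is a γ-contraction in the supremum norm. -/
theorem statement_8 (S A : Type*) [Fintype S] [Fintype A] [Nonempty S] [Nonempty A]
    (τ γ : ℝ) (hτ : 0 < τ) (hγ0 : 0 < γ) (hγ1 : γ < 1)
    (r : S → A → ℝ) (P : A → Matrix S S ℝ)
    (hP : ∀ a s s', 0 ≤ P a s s') (hrow : ∀ a s, ∑ s', P a s s' = 1)
    (φ : (S → ℝ) → S → ℝ)
    (hφ : ∀ v s, φ v s =
      τ * Real.log (∑ a, Real.exp ((r s a + γ * ∑ s', P a s s' * v s') / τ)))
    (v w : S → ℝ) :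
    Finset.univ.sup' Finset.univ_nonempty (fun s => |φ v s - φ w s|) ≤
      γ * Finset.univ.sup' Finset.univ_nonempty (fun s => |v s - w s|) := by
  set M := Finset.univ.sup' Finset.univ_nonempty (fun s => |v s - w s|) with hM
  have hdist : ∀ s, |v s - w s| ≤ M := fun s =>
    Finset.le_sup' (fun s => |v s - w s|) (Finset.mem_univ s)
  have key : ∀ u u' : S → ℝ, (∀ s, u s ≤ u' s + M) → ∀ s, φ u s ≤ φ u' s + γ * M := by
    intro u u' h s
    rw [hφ, hφ]
    refine mul_log_sum_exp_le hτ fun a => ?_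
    have := mul_le_mul_of_nonneg_left
      (sum_mul_le_add_of_sum_eq_one (hP a s) (hrow a s) h) hγ0.le
    linarith
  refine Finset.sup'_le _ _ fun s _ => ?_
  have h1 := key v w (fun s => by linarith [(abs_le.mp (hdist s)).2]) s
  have h2 := key w v (fun s => by linarith [(abs_le.mp (hdist s)).1]) s
  exact abs_le.mpr ⟨by linarith, by linarith⟩
end

section
/- Let S and A be nonempty finite sets, γ ∈ (0,1), for each a ∈ A let P_a be an |S|×|S| row-stochastic matrix and K_a = I − γP_a, let r ∈ ℝ^{S×A}, α > 0, τ > 0. Suppose (v*, u*) ∈ ℝ^S × ℝ_{>0}^{S×A} satisfies the quadratically convexified first-order condition: α v*_{s'} = Σ_{s,a} K_{ass'} u*_{sa} for all s', and τ log(u*_{sa}/ũ*_s) = r_{sa} − Σ_{s'} K_{ass'} v*_{s'} for all (s,a). For any (v,u) ∈ ℝ^S × ℝ_{>0}^{S×A}, define the standard NGAD vector field V_{s'} = −( v_{s'} − (1/α) Σ_{s,a} K_{ass'} u_{sa} ) and U_{sa} = −u_{sa}( log(u_{sa}/ũ_s) − (1/τ)( r_{sa} − Σ_{s'} K_{ass'}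 v_{s'} ) ). Then the directional derivative of L(v,u) = (α/2)Σ_s(v_s−v*_s)² + τΣ_{s,a}(u*_{sa}log(u*_{sa}/u_{sa}) + u_{sa} − u*_{sa}) along (V,U) equals −α Σ_{s'} (v_{s'} − v*_{s'})² − τ Σ_{s,a} (u_{sa} − u*_{sa})( log(u_{sa}/ũ_s) − log(u*_{sa}/ũ*_s) ), and this quantity is ≤ 0. -/
open Matrix

/-!
The chain rule gives `α ∑ (v - v*) V + τ ∑ (1 - u*/u) U` for the derivative of the Lyapunov
function. By the first-order conditions, `α V = -α (v - v*) + Kᵀ (u - u*)` and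
`τ (1 - u*/u) U = -(u - u*) (τ (ℓ - ℓ*) + K (v - v*))`, where `ℓ` and `ℓ*` are the log-policies.
The bilinear terms in `v - v*` and `u - u*` cancel, which is the claimed identity. In each state,
the remaining sum over actions is a symmetrised, weighted relative entropy of the two policies, and
so is nonnegative by two applications of Gibbs' inequality (`gibbs_weighted`). -/

/-- Gibbs' inequality for the normalisations of two positive vectors, scaled by the total mass
of `x`. -/
lemma gibbs_weighted {A : Type*} [Fintype A] [Nonempty A] (x y : A → ℝ)
    (hx : ∀ a, 0 < x a) (hy : ∀ a, 0 < y a) :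
    0 ≤ ∑ a, x a * (Real.log (x a / ∑ b, x b) - Real.log (y a / ∑ b, y b)) := by
  have hX : 0 < ∑ b, x b := Finset.sum_pos (fun a _ => hx a) Finset.univ_nonempty
  have hY : 0 < ∑ b, y b := Finset.sum_pos (fun a _ => hy a) Finset.univ_nonempty
  set X := ∑ b, x b with hXdef
  set Y := ∑ b, y b with hYdef
  have key : ∀ a, x a - y a * (X / Y) ≤
      x a * (Real.log (x a / X) - Real.log (y a / Y)) := by
    intro a
    have hxa := hx a
    have hya := hy a
    have h := Real.log_le_sub_one_of_pos (x := (y a / Y) / (x a / X)) (by positivity)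
    rw [Real.log_div (by positivity) (by positivity)] at h
    have h2 := mul_le_mul_of_nonneg_left h hxa.le
    have e : x a * ((y a / Y) / (x a / X) - 1) = y a * (X / Y) - x a := by
      field_simp
    rw [e] at h2
    linarith
  calc (0 : ℝ) = ∑ a, (x a - y a * (X / Y)) := by
        rw [Finset.sum_sub_distrib, ← Finset.sum_mul, ← hXdef, ← hYdef]
        field_simp
        ring
    _ ≤ _ := Finset.sum_le_sum fun a _ => key a

/-- Symmetrised form of `gibbs_weighted`: the normalised logarithm is a monotone map. -/
lemma sum_sub_mul_log_sub_nonneg {A : Type*} [Fintype A] [Nonempty A] (x y : A → ℝ)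
    (hx : ∀ a, 0 < x a) (hy : ∀ a, 0 < y a) :
    0 ≤ ∑ a, (x a - y a) * (Real.log (x a / ∑ b, x b) - Real.log (y a / ∑ b, y b)) := by
  have h := add_nonneg (gibbs_weighted x y hx hy) (gibbs_weighted y x hy hx)
  rw [← Finset.sum_add_distrib] at h
  refine h.trans_eq (Finset.sum_congr rfl fun a _ => ?_)
  ring

/-- Chain rule for the Lyapunov function along a straight line, before the vector field is
specified. -/
lemma hasDerivAt_lyapunov {S A : Type*} [Fintype S] [Fintype A] (α τ : ℝ)
    (vstar : S → ℝ) (ustar : S → A → ℝ) (hustar : ∀ s a, 0 < ustar s a)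
    (v : S → ℝ) (u : S → A → ℝ) (hu : ∀ s a, 0 < u s a) (V : S → ℝ) (U : S → A → ℝ) :
    HasDerivAt (fun t : ℝ => α / 2 * ∑ s, (v s + t * V s - vstar s) ^ 2 +
      τ * ∑ s, ∑ a, (ustar s a * Real.log (ustar s a / (u s a + t * U s a)) +
        (u s a + t * U s a) - ustar s a))
      (α * ∑ s, (v s - vstar s) * V s + τ * ∑ s, ∑ a, (1 - ustar s a / u s a) * U s a) 0 := by
  have line : ∀ c d : ℝ, HasDerivAt (fun t : ℝ => c + t * d) d 0 := fun c d => by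
    simpa using ((hasDerivAt_id (0 : ℝ)).mul_const d).const_add c
  have h1 : HasDerivAt (fun t : ℝ => α / 2 * ∑ s, (v s + t * V s - vstar s) ^ 2)
      (α / 2 * ∑ s, 2 * ((v s - vstar s) * V s)) 0 := by
    refine (HasDerivAt.fun_sum fun s _ => ?_).const_mul _
    refine (((line (v s) (V s)).sub_const (vstar s)).fun_pow 2).congr_deriv ?_
    simp
    ring
  have h2 : HasDerivAt (fun t : ℝ => τ * ∑ s, ∑ a,
      (ustar s a * Real.log (ustar s a / (u s a + t * U s a)) +
        (u s a + t * U s a) - ustar s a))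
      (τ * ∑ s, ∑ a, (1 - ustar s a / u s a) * U s a) 0 := by
    refine (HasDerivAt.fun_sum fun s _ => HasDerivAt.fun_sum fun a _ => ?_).const_mul _
    have hua := hu s a
    have hsa := hustar s a
    have hl := line (u s a) (U s a)
    have hne : u s a + 0 * U s a ≠ 0 := by simpa using hua.ne'
    have hd : HasDerivAt (fun t : ℝ => ustar s a / (u s a + t * U s a)) _ 0 :=
      (hasDerivAt_const (0 : ℝ) (ustar s a)).fun_div hl hne
    have hlog := hd.log (div_ne_zero hsa.ne' hne)
    refine (((hlog.const_mul (ustar s a)).fun_add hl).sub_const (ustar s a)).congr_deriv ?_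
    simp only [zero_mul, add_zero]
    field_simp
    ring
  refine (h1.fun_add h2).congr_deriv ?_
  rw [← Finset.mul_sum]
  ring

/-- Along the standard NGAD vector field (V,U), the derivative of the
Lyapunov function L equals
−α Σ_{s'}(v_{s'}−v*_{s'})² − τ Σ_{s,a}(u_{sa}−u*_{sa})(log(u_{sa}/ũ_s) − log(u*_{sa}/ũ*_s)),
which is ≤ 0. -/
theorem statement_13 (S A : Type*) [Fintype S] [Fintype A] [Nonempty S] [Nonempty A]
    [DecidableEq S]
    (γ : ℝ) (hγ0 : 0 < γ) (hγ1 : γ < 1)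
    (P : A → Matrix S S ℝ) (hP : ∀ a s s', 0 ≤ P a s s') (hrow : ∀ a s, ∑ s', P a s s' = 1)
    (K : A → Matrix S S ℝ) (hK : ∀ a, K a = 1 - γ • P a)
    (r : S → A → ℝ) (α τ : ℝ) (hα : 0 < α) (hτ : 0 < τ)
    (vstar : S → ℝ) (ustar : S → A → ℝ) (hustar : ∀ s a, 0 < ustar s a)
    (hfoc1 : ∀ s', α * vstar s' = ∑ s, ∑ a, K a s s' * ustar s a)
    (hfoc2 : ∀ s a, τ * Real.log (ustar s a / ∑ b, ustar s b) =
      r s a - ∑ s', K a s s' * vstar s')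
    (v : S → ℝ) (u : S → A → ℝ) (hu : ∀ s a, 0 < u s a)
    (V : S → ℝ) (U : S → A → ℝ)
    (hV : ∀ s', V s' = -(v s' - (1 / α) * ∑ s, ∑ a, K a s s' * u s a))
    (hU : ∀ s a, U s a = -(u s a * (Real.log (u s a / ∑ b, u s b) -
      (1 / τ) * (r s a - ∑ s', K a s s' * v s'))))
    (L : (S → ℝ) → (S → A → ℝ) → ℝ)
    (hL : ∀ v' u', L v' u' = α / 2 * ∑ s, (v' s - vstar s) ^ 2 +
      τ * ∑ s, ∑ a, (ustar s a * Real.log (ustar s a / u' s a) + u' s a - ustar s a)) :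
    deriv (fun t : ℝ => L (fun s => v s + t * V s) (fun s a => u s a + t * U s a)) 0 =
      -(α * ∑ s', (v s' - vstar s') ^ 2) -
        τ * ∑ s, ∑ a, (u s a - ustar s a) *
          (Real.log (u s a / ∑ b, u s b) - Real.log (ustar s a / ∑ b, ustar s b)) ∧
    deriv (fun t : ℝ => L (fun s => v s + t * V s) (fun s a => u s a + t * U s a)) 0 ≤ 0 := by
  have hderiv : deriv (fun t : ℝ => L (fun s => v s + t * V s) (fun s a => u s a + t * U s a)) 0 =
      -(α * ∑ s', (v s' - vstar s') ^ 2) -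
        τ * ∑ s, ∑ a, (u s a - ustar s a) *
          (Real.log (u s a / ∑ b, u s b) - Real.log (ustar s a / ∑ b, ustar s b)) := by
    simp only [hL]
    rw [(hasDerivAt_lyapunov α τ vstar ustar hustar v u hu V U).deriv]
    have eV : ∀ s', α * ((v s' - vstar s') * V s') = -(α * (v s' - vstar s') ^ 2) +
        ∑ s, ∑ a, (u s a - ustar s a) * (K a s s' * (v s' - vstar s')) := by
      intro s'
      have e : ∑ s, ∑ a, (u s a - ustar s a) * (K a s s' * (v s' - vstar s')) =
          (v s' - vstar s') * (∑ s, ∑ a, K a s s' * u s a - α * vstar s') := by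
        rw [hfoc1 s']
        simp only [← Finset.sum_sub_distrib, Finset.mul_sum]
        refine Finset.sum_congr rfl fun s _ => Finset.sum_congr rfl fun a _ => ?_
        ring
      rw [e, hV s']
      field_simp
      ring
    have eU : ∀ s a, τ * ((1 - ustar s a / u s a) * U s a) =
        -(τ * ((u s a - ustar s a) *
          (Real.log (u s a / ∑ b, u s b) - Real.log (ustar s a / ∑ b, ustar s b)))) -
        ∑ s', (u s a - ustar s a) * (K a s s' * (v s' - vstar s')) := by
      intro s a
      have hua := (hu s a).ne'
      have e : ∑ s', (u s a - ustar s a) * (K a s s' * (v s' - vstar s')) =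
          (u s a - ustar s a) * (∑ s', K a s s' * v s' - ∑ s', K a s s' * vstar s') := by
        rw [← Finset.sum_sub_distrib, Finset.mul_sum]
        refine Finset.sum_congr rfl fun s' _ => ?_
        ring
      have hr : r s a = τ * Real.log (ustar s a / ∑ b, ustar s b) +
          ∑ s', K a s s' * vstar s' := by
        linarith [hfoc2 s a]
      rw [e, hU s a, hr]
      -- The logarithms are made atomic so that clearing denominators leaves them untouched.
      generalize Real.log (u s a / ∑ b, u s b) = l
      generalize Real.log (ustar s a / ∑ b, ustar s b) = l'
      field_simp
      ring
    have swap : ∑ s', ∑ s, ∑ a, (u s a - ustar s a) * (K a s s' * (v s' - vstar s')) =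
        ∑ s, ∑ a, ∑ s', (u s a - ustar s a) * (K a s s' * (v s' - vstar s')) := by
      rw [Finset.sum_comm]
      exact Finset.sum_congr rfl fun s _ => Finset.sum_comm
    simp only [Finset.mul_sum, eV, eU, Finset.sum_add_distrib, Finset.sum_sub_distrib,
      Finset.sum_neg_distrib] at swap ⊢
    linarith
  refine ⟨hderiv, ?_⟩
  rw [hderiv]
  have h1 : 0 ≤ α * ∑ s', (v s' - vstar s') ^ 2 := by positivity
  have h2 := mul_nonneg hτ.le (Finset.sum_nonneg fun s (_ : s ∈ Finset.univ) =>
    sum_sub_mul_log_sub_nonneg (u s) (ustar s) (hu s) (hustar s))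
  linarith
end

section
/- Let m, n ≥ 1, B ∈ ℝ^{n×m}, and let Q ∈ ℝ^{n×n} be symmetric positive semidefinite. Consider the real block matrix J̃ = [[I_m, −Bᵀ], [B, Q]] of size (m+n)×(m+n). Then every complex eigenvalue λ of J̃ satisfies Re(λ) ≥ 0. If moreover the null space of Q intersects the null space of Bᵀ only at 0 (i.e., Qx = 0 and Bᵀx = 0 imply x = 0 for x ∈ ℝ^n), then every complex eigenvalue λ of J̃ satisfies Re(λ) > 0. -/
open Matrix

/-!
Write an eigenvector as `(u, v)` with `u = a + i b`, `v = c + i d` and the eigenvalue as `s + i t`.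
Taking the real part of the Hermitian pairing of the eigenvalue equation with `(u, v)`, the
skew-symmetric blocks `-Bᵀ` and `B` cancel, which leaves
`|a|² + |b|² + cᵀQc + dᵀQd = s (|a|² + |b|² + |c|² + |d|²)`.
The left side is nonnegative, so `s ≥ 0`. If `s = 0`, then `a = b = 0` and `Qc = Qd = 0`; the first
block row then gives `Bᵀc = Bᵀd = 0`, so `c` and `d` lie in `ker Q ∩ ker Bᵀ`.
-/

/-- The eigenvalue equation of the block matrix, split into real and imaginary parts. -/
lemma block_eigen_real {m n : ℕ} (B : Matrix (Fin n) (Fin m) ℝ) (Q : Matrix (Fin n) (Fin n) ℝ)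
    (μ : ℂ) (x : (Fin m ⊕ Fin n) → ℂ) (hx : x ≠ 0)
    (h : ((fromBlocks (1 : Matrix (Fin m) (Fin m) ℝ) (-Bᵀ) B Q).map
          (fun t : ℝ => (t : ℂ))).mulVec x = μ • x) :
    ∃ (a b : Fin m → ℝ) (c d : Fin n → ℝ),
      ¬ (a = 0 ∧ b = 0 ∧ c = 0 ∧ d = 0) ∧
      a - Bᵀ *ᵥ c = μ.re • a - μ.im • b ∧
      b - Bᵀ *ᵥ d = μ.re • b + μ.im • a ∧
      B *ᵥ a + Q *ᵥ c = μ.re • c - μ.im • d ∧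
      B *ᵥ b + Q *ᵥ d = μ.re • d + μ.im • c := by
  -- The matrix is real, so it acts separately on the real and imaginary parts of `x`.
  have hre : (fromBlocks (1 : Matrix (Fin m) (Fin m) ℝ) (-Bᵀ) B Q) *ᵥ (fun i => (x i).re)
      = μ.re • (fun i => (x i).re) - μ.im • (fun i => (x i).im) := by
    funext i
    have := congrArg Complex.re (congrFun h i)
    simpa [mulVec, dotProduct] using this
  have him : (fromBlocks (1 : Matrix (Fin m) (Fin m) ℝ) (-Bᵀ) B Q) *ᵥ (fun i => (x i).im)
      = μ.re • (fun i => (x i).im) + μ.im • (fun i => (x i).re) := by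
    funext i
    have := congrArg Complex.im (congrFun h i)
    simpa [mulVec, dotProduct] using this
  rw [fromBlocks_mulVec] at hre him
  refine ⟨fun i => (x (.inl i)).re, fun i => (x (.inl i)).im, fun i => (x (.inr i)).re,
    fun i => (x (.inr i)).im, ?_, ?_, ?_, ?_, ?_⟩
  · rintro ⟨h1, h2, h3, h4⟩
    apply hx
    funext i
    rcases i with i | i
    · exact Complex.ext (congrFun h1 i) (congrFun h2 i)
    · exact Complex.ext (congrFun h3 i) (congrFun h4 i)
  · funext i
    simpa [Function.comp_def, neg_mulVec, sub_eq_add_neg] using congrFun hre (.inl i)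
  · funext i
    simpa [Function.comp_def, neg_mulVec, sub_eq_add_neg] using congrFun him (.inl i)
  · funext i
    simpa [Function.comp_def] using congrFun hre (.inr i)
  · funext i
    simpa [Function.comp_def] using congrFun him (.inr i)

/-- The energy identity: the contributions of `-Bᵀ` and `B`, and those of the imaginary part `t`,
cancel. -/
lemma block_energy {m n : ℕ} (B : Matrix (Fin n) (Fin m) ℝ) (Q : Matrix (Fin n) (Fin n) ℝ)
    (s t : ℝ) (a b : Fin m → ℝ) (c d : Fin n → ℝ)
    (h1 : a - Bᵀ *ᵥ c = s • a - t • b) (h2 : b - Bᵀ *ᵥ d = s • b + t • a)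
    (h3 : B *ᵥ a + Q *ᵥ c = s • c - t • d) (h4 : B *ᵥ b + Q *ᵥ d = s • d + t • c) :
    a ⬝ᵥ a + b ⬝ᵥ b + c ⬝ᵥ (Q *ᵥ c) + d ⬝ᵥ (Q *ᵥ d)
      = s * (a ⬝ᵥ a + b ⬝ᵥ b + c ⬝ᵥ c + d ⬝ᵥ d) := by
  have hB : ∀ (p : Fin m → ℝ) (q : Fin n → ℝ), p ⬝ᵥ (Bᵀ *ᵥ q) = q ⬝ᵥ (B *ᵥ p) := by
    intro p q
    rw [mulVec_transpose, dotProduct_comm, dotProduct_mulVec]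
  have e1 := congrArg (a ⬝ᵥ ·) h1
  have e2 := congrArg (b ⬝ᵥ ·) h2
  have e3 := congrArg (c ⬝ᵥ ·) h3
  have e4 := congrArg (d ⬝ᵥ ·) h4
  simp only [dotProduct_add, dotProduct_sub, dotProduct_smul, smul_eq_mul, hB] at e1 e2 e3 e4
  rw [dotProduct_comm b a] at e2
  rw [dotProduct_comm d c] at e4
  linarith

/-- For the block matrix J̃ = [[I, −Bᵀ],[B, Q]] with Q symmetric PSD,
every complex eigenvalue has nonnegative real part; if moreover ker Q ∩ ker Bᵀ = 0,
every complex eigenvalue has positive real part. -/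
theorem statement_15 (m n : ℕ) (hm : 1 ≤ m) (hn : 1 ≤ n)
    (B : Matrix (Fin n) (Fin m) ℝ) (Q : Matrix (Fin n) (Fin n) ℝ)
    (hQ : Q.PosSemidef) :
    (∀ (μ : ℂ) (x : (Fin m ⊕ Fin n) → ℂ), x ≠ 0 →
      ((fromBlocks (1 : Matrix (Fin m) (Fin m) ℝ) (-Bᵀ) B Q).map
          (fun t : ℝ => (t : ℂ))).mulVec x = μ • x →
      0 ≤ μ.re) ∧
    ((∀ x : Fin n → ℝ, Q.mulVec x = 0 → Bᵀ.mulVec x = 0 → x = 0) →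
      ∀ (μ : ℂ) (x : (Fin m ⊕ Fin n) → ℂ), x ≠ 0 →
        ((fromBlocks (1 : Matrix (Fin m) (Fin m) ℝ) (-Bᵀ) B Q).map
            (fun t : ℝ => (t : ℂ))).mulVec x = μ • x →
        0 < μ.re) := by
  have sq : ∀ {k : ℕ} (p : Fin k → ℝ), 0 ≤ p ⬝ᵥ p := fun p =>
    Finset.sum_nonneg fun i _ => mul_self_nonneg (p i)
  have hq : ∀ p : Fin n → ℝ, 0 ≤ p ⬝ᵥ (Q *ᵥ p) := fun p => by
    simpa using hQ.dotProduct_mulVec_nonneg p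
  have hq0 : ∀ p : Fin n → ℝ, p ⬝ᵥ (Q *ᵥ p) = 0 → Q *ᵥ p = 0 := fun p hp =>
    (hQ.dotProduct_mulVec_zero_iff p).1 (by simpa using hp)
  have part1 : ∀ (μ : ℂ) (x : (Fin m ⊕ Fin n) → ℂ), x ≠ 0 →
      ((fromBlocks (1 : Matrix (Fin m) (Fin m) ℝ) (-Bᵀ) B Q).map
          (fun t : ℝ => (t : ℂ))).mulVec x = μ • x → 0 ≤ μ.re := by
    intro μ x hx h
    obtain ⟨a, b, c, d, hne, h1, h2, h3, h4⟩ := block_eigen_real B Q μ x hx h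
    have e := block_energy B Q _ _ a b c d h1 h2 h3 h4
    have hpos : 0 < a ⬝ᵥ a + b ⬝ᵥ b + c ⬝ᵥ c + d ⬝ᵥ d := by
      by_contra hcon
      have := sq a; have := sq b; have := sq c; have := sq d
      exact hne ⟨dotProduct_self_eq_zero.1 (by linarith), dotProduct_self_eq_zero.1 (by linarith),
        dotProduct_self_eq_zero.1 (by linarith), dotProduct_self_eq_zero.1 (by linarith)⟩
    refine nonneg_of_mul_nonneg_left ?_ hpos
    rw [← e]
    linarith [sq a, sq b, hq c, hq d]
  refine ⟨part1, fun hker μ x hx h => lt_of_le_of_ne (part1 μ x hx h) fun hs => ?_⟩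
  obtain ⟨a, b, c, d, hne, h1, h2, h3, h4⟩ := block_eigen_real B Q μ x hx h
  have e := block_energy B Q _ _ a b c d h1 h2 h3 h4
  rw [← hs, zero_mul] at e
  have := sq a; have := sq b; have := hq c; have := hq d
  have ha : a = 0 := dotProduct_self_eq_zero.1 (by linarith)
  have hb : b = 0 := dotProduct_self_eq_zero.1 (by linarith)
  subst ha hb
  exact hne ⟨rfl, rfl, hker c (hq0 c (by linarith)) (by simpa using h1),
    hker d (hq0 d (by linarith)) (by simpa using h2)⟩
end

section
/- Let S and A be nonempty finite sets, γ ∈ (0,1), for each a ∈ A let P_a be an |S|×|S| row-stochastic matrix and K_a = I − γP_a, and let u* ∈ ℝ^{S×A} have all entries strictly positive, with ũ*_s = Σ_a u*_{sa} and π*_{sa} = u*_{sa}/ũ*_s. Let M be the block-diagonal |S||A|×|S||A| matrix with blocks M_s = diag(1/u*_{s·}) − (1/ũ*_s)𝟙𝟙ᵀ, let D = diag(√u*) (diagonal with entries √(u*_{sa})), and let K̃ be the |S||A|×|S| matrix with K̃_{(s,a),s'} = K_{ass'}. If x ∈ ℝ^{S×A} satisfies xᵀ (D M D) x = 0 and K̃ᵀ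 D x = 0, then x = 0. In particular, the null spaces of D M D and of K̃ᵀ D intersect only at 0. -/
open Matrix

/-! Put `y = D x`, and write `ũ s = ∑ a, u s a` and `c s = (∑ a, y s a) / ũ s`. Completing the
square in each block gives
`yᵀ M y = ∑ s, ∑ a, u s a * (y s a / u s a - c s) ^ 2`, so the first hypothesis forces
`y s a = u s a * c s` (`eq_mul_of_blockForm_eq_zero`). The second hypothesis then says that
`w s = ũ s * c s` satisfies `w = γ Pᵀ_{π*} w`; as `P_{π*}` is row-stochastic, `Pᵀ_{π*}` does not
increase the `ℓ¹` norm, so `‖w‖₁ ≤ γ ‖w‖₁` and `w = 0` (`eq_zero_of_discounted_flow`). Hence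
`c = 0`, `y = 0` and, `D` being invertible, `x = 0`. -/

/-- The form `yᵀ M_s y` of one block, as a weighted sum of squares. -/
lemma blockForm_eq_sum_sq {A : Type*} [Fintype A] [Nonempty A] (u y : A → ℝ)
    (hu : ∀ a, 0 < u a) :
    ∑ a, y a ^ 2 / u a - (∑ a, y a) ^ 2 / ∑ a, u a =
      ∑ a, u a * (y a / u a - (∑ b, y b) / ∑ b, u b) ^ 2 := by
  have hU : 0 < ∑ b, u b := Finset.sum_pos (fun a _ => hu a) Finset.univ_nonempty
  set U := ∑ b, u b with hUdef
  set Y := ∑ b, y b with hYdef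
  have expand : ∀ a, u a * (y a / u a - Y / U) ^ 2 =
      y a ^ 2 / u a - 2 * (Y / U) * y a + (Y / U) ^ 2 * u a := by
    intro a
    have := (hu a).ne'
    have := hU.ne'
    field_simp
    ring
  simp only [expand, Finset.sum_add_distrib, Finset.sum_sub_distrib, ← Finset.mul_sum,
    ← hUdef, ← hYdef]
  have := hU.ne'
  field_simp
  ring

/-- The kernel of the positive semidefinite form `yᵀ M y` consists of the vectors that are, in
each block, proportional to `u`. -/
lemma eq_mul_of_blockForm_eq_zero {S A : Type*} [Fintype S] [Fintype A] [Nonempty A]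
    (u y : S → A → ℝ) (hu : ∀ s a, 0 < u s a)
    (h : ∑ s, (∑ a, y s a ^ 2 / u s a - (∑ a, y s a) ^ 2 / ∑ a, u s a) = 0) (s : S) (a : A) :
    y s a = u s a * ((∑ b, y s b) / ∑ b, u s b) := by
  simp only [fun s => blockForm_eq_sum_sq (u s) (y s) (hu s)] at h
  have hnn : ∀ s a, 0 ≤ u s a * (y s a / u s a - (∑ b, y s b) / ∑ b, u s b) ^ 2 :=
    fun s a => mul_nonneg (hu s a).le (sq_nonneg _)
  rw [Finset.sum_eq_zero_iff_of_nonneg (fun s _ => Finset.sum_nonneg fun a _ => hnn s a)] at h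
  have hs := h s (Finset.mem_univ s)
  rw [Finset.sum_eq_zero_iff_of_nonneg (fun a _ => hnn s a)] at hs
  have hsq := (mul_eq_zero.mp (hs a (Finset.mem_univ a))).resolve_left (hu s a).ne'
  rw [← sub_eq_zero.mp (pow_eq_zero_iff two_ne_zero |>.mp hsq)]
  have hne := (hu s a).ne'
  field_simp

/-- Injectivity of `Kᵀ_{π*}`, in the variable `c` with `w s = (∑ a, u s a) * c s`: the discounted
flow equation only has the trivial solution, by an `ℓ¹` contraction. -/
lemma eq_zero_of_discounted_flow {S A : Type*} [Fintype S] [Fintype A] [Nonempty A]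
    (γ : ℝ) (hγ0 : 0 < γ) (hγ1 : γ < 1)
    (P : A → Matrix S S ℝ) (hP : ∀ a s s', 0 ≤ P a s s') (hrow : ∀ a s, ∑ s', P a s s' = 1)
    (u : S → A → ℝ) (hu : ∀ s a, 0 < u s a) (c : S → ℝ)
    (h : ∀ s', (∑ a, u s' a) * c s' = γ * ∑ s, ∑ a, P a s s' * (u s a * c s)) (s : S) :
    c s = 0 := by
  have hU : ∀ s, 0 < ∑ a, u s a :=
    fun s => Finset.sum_pos (fun a _ => hu s a) Finset.univ_nonempty
  have hle : ∀ s', (∑ a, u s' a) * |c s'| ≤ γ * ∑ s, ∑ a, P a s s' * (u s a * |c s|) := by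
    intro s'
    have habs := congrArg abs (h s')
    rw [abs_mul, abs_of_pos (hU s'), abs_mul, abs_of_pos hγ0] at habs
    rw [habs]
    refine mul_le_mul_of_nonneg_left ?_ hγ0.le
    refine (Finset.abs_sum_le_sum_abs _ _).trans (Finset.sum_le_sum fun s _ => ?_)
    refine (Finset.abs_sum_le_sum_abs _ _).trans (Finset.sum_le_sum fun a _ => ?_)
    rw [abs_mul, abs_mul, abs_of_nonneg (hP a s s'), abs_of_pos (hu s a)]
  have hmass : ∑ s', ∑ s, ∑ a, P a s s' * (u s a * |c s|) = ∑ s, (∑ a, u s a) * |c s| := by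
    rw [Finset.sum_comm]
    refine Finset.sum_congr rfl fun s _ => ?_
    rw [Finset.sum_comm, Finset.sum_mul]
    refine Finset.sum_congr rfl fun a _ => ?_
    rw [← Finset.sum_mul, hrow, one_mul]
  have htot := Finset.sum_le_sum fun s' (_ : s' ∈ Finset.univ) => hle s'
  rw [← Finset.mul_sum, hmass] at htot
  have hnn : ∀ s ∈ Finset.univ, 0 ≤ (∑ a, u s a) * |c s| :=
    fun s _ => mul_nonneg (hU s).le (abs_nonneg _)
  have hzero : ∑ s, (∑ a, u s a) * |c s| = 0 := by
    nlinarith [Finset.sum_nonneg hnn]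
  have hs := (Finset.sum_eq_zero_iff_of_nonneg hnn).mp hzero s (Finset.mem_univ s)
  have hne := (hU s).ne'
  exact abs_eq_zero.mp ((mul_eq_zero.mp hs).resolve_left hne)

/-- With M the block-diagonal matrix with blocks
M_s = diag(1/u*_{s·}) − (1/ũ*_s)𝟙𝟙ᵀ, D = diag(√u*), and K̃_{(s,a),s'} = K_{ass'}
(K_a = I − γP_a, P_a row-stochastic, 0 < γ < 1), any x with xᵀ(DMD)x = 0 and
K̃ᵀDx = 0 must be zero. -/
theorem statement_16 (S A : Type*) [Fintype S] [Fintype A] [Nonempty S] [Nonempty A]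
    [DecidableEq S] [DecidableEq A]
    (γ : ℝ) (hγ0 : 0 < γ) (hγ1 : γ < 1)
    (P : A → Matrix S S ℝ) (hP : ∀ a s s', 0 ≤ P a s s') (hrow : ∀ a s, ∑ s', P a s s' = 1)
    (K : A → Matrix S S ℝ) (hK : ∀ a, K a = 1 - γ • P a)
    (ustar : S → A → ℝ) (hustar : ∀ s a, 0 < ustar s a)
    (M D : Matrix (S × A) (S × A) ℝ) (Ktil : Matrix (S × A) S ℝ)
    (hM : ∀ p q : S × A, M p q =
      if p.1 = q.1 then
        (if p.2 = q.2 then 1 / ustar p.1 p.2 else 0) - 1 / ∑ b, ustar p.1 b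
      else 0)
    (hD : ∀ p q : S × A, D p q = if p = q then Real.sqrt (ustar p.1 p.2) else 0)
    (hKtil : ∀ (p : S × A) (s' : S), Ktil p s' = K p.2 p.1 s')
    (x : S × A → ℝ)
    (h1 : x ⬝ᵥ (D * M * D).mulVec x = 0)
    (h2 : (Ktilᵀ * D).mulVec x = 0) :
    x = 0 := by
  have hDdiag : D = Matrix.diagonal fun p : S × A => Real.sqrt (ustar p.1 p.2) := by
    ext p q
    rw [hD, Matrix.diagonal_apply]
  set y : S → A → ℝ := fun s a => Real.sqrt (ustar s a) * x (s, a) with hy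
  have hDx : D *ᵥ x = fun p => y p.1 p.2 := by
    ext p
    rw [hDdiag, Matrix.mulVec_diagonal]
  have hform : ∑ s, (∑ a, y s a ^ 2 / ustar s a - (∑ a, y s a) ^ 2 / ∑ a, ustar s a) = 0 := by
    have hMy : ∀ s a, (M *ᵥ fun p => y p.1 p.2) (s, a) =
        y s a / ustar s a - (∑ b, y s b) / ∑ b, ustar s b := by
      intro s a
      simp only [Matrix.mulVec, dotProduct, Fintype.sum_prod_type, hM]
      rw [Finset.sum_eq_single s (by
        intro t _ ht
        simp [ht.symm]) (by simp)]
      simp [sub_mul, Finset.sum_sub_distrib, ← Finset.mul_sum, div_eq_inv_mul]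
    have hquad : (D *ᵥ x) ⬝ᵥ (M *ᵥ (D *ᵥ x)) = 0 := by
      rw [← h1, ← Matrix.mulVec_mulVec, ← Matrix.mulVec_mulVec, Matrix.dotProduct_mulVec x D,
        ← Matrix.mulVec_transpose]
      simp [hDdiag]
    rw [hDx, dotProduct, Fintype.sum_prod_type] at hquad
    rw [← hquad]
    refine Finset.sum_congr rfl fun s _ => ?_
    simp only [hMy, mul_sub, Finset.sum_sub_distrib, ← Finset.sum_mul]
    congr 1
    · exact Finset.sum_congr rfl fun a _ => by ring
    · ring
  have hyc := eq_mul_of_blockForm_eq_zero ustar y hustar hform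
  have hc := eq_zero_of_discounted_flow γ hγ0 hγ1 P hP hrow ustar hustar
    (fun s => (∑ b, y s b) / ∑ b, ustar s b) (by
      intro s'
      have hflow := congrFun h2 s'
      rw [← Matrix.mulVec_mulVec, hDx] at hflow
      simp only [Matrix.mulVec, dotProduct, Fintype.sum_prod_type, Matrix.transpose_apply, hKtil,
        hK, Matrix.sub_apply, Matrix.smul_apply, smul_eq_mul, sub_mul, Finset.sum_sub_distrib,
        Matrix.one_apply, Pi.zero_apply] at hflow
      simp only [← hyc, Finset.sum_mul, Finset.mul_sum]
      rw [← sub_eq_zero, ← hflow]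
      congr 1
      · rw [Finset.sum_eq_single s' (by
          intro t _ ht
          simp [ht]) (by simp)]
        simp
      · simp only [mul_assoc])
  ext ⟨s, a⟩
  have hzero : Real.sqrt (ustar s a) * x (s, a) = 0 := by
    have := hyc s a
    rwa [hc s, mul_zero] at this
  exact (mul_eq_zero.mp hzero).resolve_left (Real.sqrt_pos.mpr (hustar s a)).ne'
end

section
/- Let S and A be nonempty finite sets with |A| ≥ 2, γ ∈ (0,1), for each a ∈ A let P_a be an |S|×|S| row-stochastic matrix and K_a = I − γP_a, let r ∈ ℝ^{S×A} with all entries nonnegative, τ > 0, α > 0, and let e ∈ ℝ^S have all entries strictly positive. Suppose (v, u°) ∈ ℝ^S × ℝ_{>0}^{S×A} satisfies the standard first-order condition: e_{s'} = Σ_{s,a} K_{ass'} u°_{sa} for all s', and τ log(u°_{sa}/ũ°_s) = r_{sa} − Σ_{s'} K_{ass'} v_{s'} for all (s,a). Let π_{sa} = u°_{sa}/ũ°_s, K_π = I − γP_π where (P_π)_{ss'} = Σ_a π_{sa}P_{ass'}, set w = α (K_πᵀ)^{-1} v and u*_{sa} = (w_s/ũ°_s) u°_{sa}. Then: v has all entries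 strictly positive, w has all entries strictly positive, u* has all entries strictly positive, u*_{sa}/ũ*_s = π_{sa} for all (s,a), and (v, u*) satisfies the quadratically convexified first-order condition: α v_{s'} = Σ_{s,a} K_{ass'} u*_{sa} for all s' and τ log(u*_{sa}/ũ*_s) = r_{sa} − Σ_{s'} K_{ass'} v_{s'} for all (s,a). -/
/-!
The optimality condition reads `K_a v = r_a - τ log π_a`. As `|A| ≥ 2`, every `π_{sa}` is `< 1`, so
`K_a v > 0`, and evaluating this at a minimizer of `v` gives `v > 0` (`pos_of_discounted_lt`).
Next, `K_πᵀ` obeys a minimum principle: `K_πᵀ x ≥ 0` implies `x ≥ 0`, since the total mass of the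
negative part of `x` contracts by `γ` (`nonneg_of_transpose_discounted_le`). Applied to `±x`, the
principle makes `K_πᵀ` injective, hence invertible, so `K_πᵀ w = α v > 0` holds and gives `w > 0`.
Finally `u*_{sa} = w_s π_{sa}` with `∑_a π_{sa} = 1`, so `u*` has policy `π` and
`∑_{s,a} K_{ass'} u*_{sa} = (K_πᵀ w)_{s'} = α v_{s'}`.
-/

open Matrix

/-- Minimum principle for `I - γP` with `P` row-stochastic, in strict form. -/
lemma pos_of_discounted_lt {S : Type*} [Fintype S] [Nonempty S] {γ : ℝ}
    (hγ0 : 0 < γ) (hγ1 : γ < 1) (P : Matrix S S ℝ) (hP : ∀ s s', 0 ≤ P s s')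
    (hrow : ∀ s, ∑ s', P s s' = 1) (v : S → ℝ) (hv : ∀ s, γ * ∑ s', P s s' * v s' < v s) (s : S) :
    0 < v s := by
  obtain ⟨m, hm⟩ := Finite.exists_min v
  have h1 : v m ≤ ∑ s', P m s' * v s' := by
    calc v m = ∑ s', P m s' * v m := by rw [← Finset.sum_mul, hrow, one_mul]
      _ ≤ _ := Finset.sum_le_sum fun s' _ => mul_le_mul_of_nonneg_left (hm s') (hP m s')
  have h2 := hv m
  have h3 := mul_le_mul_of_nonneg_left h1 hγ0.le
  have h4 : 0 < v m := by nlinarith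
  exact h4.trans_le (hm s)

/-- Minimum principle for `(I - γQ)ᵀ` with `Q` row-stochastic. -/
lemma nonneg_of_transpose_discounted_le {S : Type*} [Fintype S] {γ : ℝ}
    (hγ0 : 0 < γ) (hγ1 : γ < 1) (Q : Matrix S S ℝ) (hQ : ∀ s s', 0 ≤ Q s s')
    (hrow : ∀ s, ∑ s', Q s s' = 1) (x : S → ℝ) (hx : ∀ s', γ * ∑ s, Q s s' * x s ≤ x s') (s : S) :
    0 ≤ x s := by
  have h0 : ∀ s, 0 ≤ max (-x s) 0 := fun s => le_max_right _ _
  have h1 : ∀ s', max (-x s') 0 ≤ γ * ∑ s, Q s s' * max (-x s) 0 := by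
    intro s'
    apply max_le
    · have h2 : ∑ s, Q s s' * (-x s) ≤ ∑ s, Q s s' * max (-x s) 0 :=
        Finset.sum_le_sum fun s _ => mul_le_mul_of_nonneg_left (le_max_left _ _) (hQ s s')
      have h3 := mul_le_mul_of_nonneg_left h2 hγ0.le
      simp only [mul_neg, Finset.sum_neg_distrib] at h3
      linarith [hx s']
    · exact mul_nonneg hγ0.le (Finset.sum_nonneg fun s _ => mul_nonneg (hQ s s') (h0 s))
  have h2 : ∑ s', max (-x s') 0 ≤ γ * ∑ s, max (-x s) 0 := by
    calc ∑ s', max (-x s') 0 ≤ ∑ s', γ * ∑ s, Q s s' * max (-x s) 0 :=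
          Finset.sum_le_sum fun s' _ => h1 s'
      _ = γ * ∑ s, max (-x s) 0 := by
          rw [← Finset.mul_sum, Finset.sum_comm]
          simp only [← Finset.sum_mul, hrow, one_mul]
  have h3 := Finset.single_le_sum (f := fun s => max (-x s) 0) (fun s _ => h0 s) (Finset.mem_univ s)
  have h4 := le_max_left (-x s) 0
  have h5 : ∑ s, max (-x s) 0 ≤ 0 := by nlinarith
  linarith

/-- From a solution (v, u°) of the standard first-order condition, setting
π_{sa} = u°_{sa}/ũ°_s, K_π = I − γP_π, w = α(K_πᵀ)⁻¹v and u*_{sa} = (w_s/ũ°_s)u°_{sa},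
one gets: v, w, u* entrywise positive, u*_{sa}/ũ*_s = π_{sa}, and (v, u*) solves the
quadratically convexified first-order condition. -/
theorem statement_18 (S A : Type*) [Fintype S] [Fintype A] [Nonempty S] [Nonempty A]
    [DecidableEq S]
    (hA : 2 ≤ Fintype.card A)
    (γ : ℝ) (hγ0 : 0 < γ) (hγ1 : γ < 1)
    (P : A → Matrix S S ℝ) (hP : ∀ a s s', 0 ≤ P a s s') (hrow : ∀ a s, ∑ s', P a s s' = 1)
    (K : A → Matrix S S ℝ) (hK : ∀ a, K a = 1 - γ • P a)
    (r : S → A → ℝ) (hr : ∀ s a, 0 ≤ r s a)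
    (τ α : ℝ) (hτ : 0 < τ) (hα : 0 < α)
    (e : S → ℝ) (he : ∀ s, 0 < e s)
    (v : S → ℝ) (u0 : S → A → ℝ) (hu0 : ∀ s a, 0 < u0 s a)
    (hfoc1 : ∀ s', e s' = ∑ s, ∑ a, K a s s' * u0 s a)
    (hfoc2 : ∀ s a, τ * Real.log (u0 s a / ∑ b, u0 s b) = r s a - ∑ s', K a s s' * v s')
    (pi : S → A → ℝ) (hpi : ∀ s a, pi s a = u0 s a / ∑ b, u0 s b)
    (Kpi : Matrix S S ℝ)
    (hKpi : ∀ s s', Kpi s s' = (if s = s' then 1 else 0) - γ * ∑ a, pi s a * P a s s')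
    (w : S → ℝ) (hw : w = α • (Kpiᵀ)⁻¹.mulVec v)
    (ustar : S → A → ℝ) (hustar : ∀ s a, ustar s a = w s / (∑ b, u0 s b) * u0 s a) :
    (∀ s, 0 < v s) ∧ (∀ s, 0 < w s) ∧ (∀ s a, 0 < ustar s a) ∧
    (∀ s a, ustar s a / (∑ b, ustar s b) = pi s a) ∧
    (∀ s', α * v s' = ∑ s, ∑ a, K a s s' * ustar s a) ∧
    (∀ s a, τ * Real.log (ustar s a / ∑ b, ustar s b) = r s a - ∑ s', K a s s' * v s') := by
  have hpos : ∀ s, 0 < ∑ b, u0 s b := fun s =>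
    Finset.sum_pos (fun b _ => hu0 s b) Finset.univ_nonempty
  have hpi0 : ∀ s a, 0 < pi s a := fun s a => by rw [hpi]; exact div_pos (hu0 s a) (hpos s)
  have hpisum : ∀ s, ∑ a, pi s a = 1 := fun s => by
    simp only [hpi, ← Finset.sum_div]
    exact div_self (ne_of_gt (hpos s))
  -- A second action carries positive mass, so no action has probability one.
  have hpi1 : ∀ s a, pi s a < 1 := by
    intro s a
    obtain ⟨b, hb⟩ := Fintype.exists_ne_of_one_lt_card (by omega : 1 < Fintype.card A) a
    rw [← hpisum s]
    exact Finset.single_lt_sum hb (Finset.mem_univ a) (Finset.mem_univ b) (hpi0 s b)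
      fun c _ _ => (hpi0 s c).le
  have hKv : ∀ a s, ∑ s', K a s s' * v s' = v s - γ * ∑ s', P a s s' * v s' := by
    intro a s
    simp [hK, Matrix.sub_apply, Matrix.one_apply, sub_mul, Finset.sum_sub_distrib, Finset.mul_sum,
      mul_assoc]
  have hv : ∀ s, 0 < v s := by
    obtain ⟨a⟩ := ‹Nonempty A›
    refine pos_of_discounted_lt hγ0 hγ1 (P a) (hP a) (hrow a) v fun s => ?_
    have h1 := hfoc2 s a
    rw [← hpi, hKv] at h1
    have h2 := mul_neg_of_pos_of_neg hτ (Real.log_neg (hpi0 s a) (hpi1 s a))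
    linarith [hr s a]
  -- `Q` is the transition matrix `P_π`.
  let Q : Matrix S S ℝ := fun s s' => ∑ a, pi s a * P a s s'
  have hQ : ∀ s s', 0 ≤ Q s s' := fun s s' =>
    Finset.sum_nonneg fun a _ => mul_nonneg (hpi0 s a).le (hP a s s')
  have hQrow : ∀ s, ∑ s', Q s s' = 1 := by
    intro s
    change ∑ s', ∑ a, pi s a * P a s s' = 1
    rw [Finset.sum_comm]
    simp only [← Finset.mul_sum, hrow, mul_one, hpisum]
  have hKx : ∀ (x : S → ℝ) s', (Kpiᵀ *ᵥ x) s' = x s' - γ * ∑ s, Q s s' * x s := by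
    intro x s'
    have : ∀ s, Kpi s s' = (if s = s' then 1 else 0) - γ * Q s s' := fun s => hKpi s s'
    simp [Matrix.mulVec, dotProduct, this, sub_mul, Finset.sum_sub_distrib, Finset.mul_sum,
      mul_assoc]
  have hnn : ∀ x : S → ℝ, (∀ s, 0 ≤ (Kpiᵀ *ᵥ x) s) → ∀ s, 0 ≤ x s := by
    intro x hx
    refine nonneg_of_transpose_discounted_le hγ0 hγ1 Q hQ hQrow x fun s' => ?_
    have := hx s'
    rw [hKx] at this
    linarith
  have hinj : Function.Injective Kpiᵀ.mulVec := by
    intro x y hxy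
    have hxy' : Kpiᵀ *ᵥ x = Kpiᵀ *ᵥ y := hxy
    ext s
    have h1 := hnn (x - y) (fun s => by simp [Matrix.mulVec_sub, hxy']) s
    have h2 := hnn (y - x) (fun s => by simp [Matrix.mulVec_sub, hxy']) s
    simp only [Pi.sub_apply] at h1 h2
    linarith
  have hunit : IsUnit Kpiᵀ := Matrix.mulVec_injective_iff_isUnit.mp hinj
  have hKw : Kpiᵀ *ᵥ w = α • v := by
    rw [hw, Matrix.mulVec_smul, Matrix.mulVec_mulVec,
      Matrix.mul_nonsing_inv _ ((Matrix.isUnit_iff_isUnit_det _).mp hunit), Matrix.one_mulVec]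
  have hKw' : ∀ s', w s' - γ * ∑ s, Q s s' * w s = α * v s' := fun s' => by
    rw [← hKx, hKw, Pi.smul_apply, smul_eq_mul]
  have hw0 : ∀ s, 0 ≤ w s := hnn w fun s => by
    rw [hKw]; exact (mul_pos hα (hv s)).le
  have hwpos : ∀ s, 0 < w s := by
    intro s
    have h1 := hKw' s
    have h2 : 0 ≤ γ * ∑ t, Q t s * w t :=
      mul_nonneg hγ0.le (Finset.sum_nonneg fun t _ => mul_nonneg (hQ t s) (hw0 t))
    linarith [mul_pos hα (hv s)]
  have hu : ∀ s a, ustar s a = w s * pi s a := fun s a => by rw [hustar, hpi]; ring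
  have husum : ∀ s, ∑ b, ustar s b = w s := fun s => by
    simp only [hu, ← Finset.mul_sum, hpisum, mul_one]
  have hratio : ∀ s a, ustar s a / (∑ b, ustar s b) = pi s a := fun s a => by
    rw [husum, hu, mul_div_cancel_left₀ _ (hwpos s).ne']
  refine ⟨hv, hwpos, fun s a => ?_, hratio, fun s' => ?_, fun s a => ?_⟩
  · rw [hu]; exact mul_pos (hwpos s) (hpi0 s a)
  · have hs : ∀ s, ∑ a, K a s s' * ustar s a = Kpiᵀ s' s * w s := by
      intro s
      have h1 : ∀ a, K a s s' * ustar s a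
          = (if s = s' then 1 else 0) * w s * pi s a - γ * w s * (pi s a * P a s s') := by
        intro a
        rw [hu, hK, Matrix.sub_apply, Matrix.one_apply, Matrix.smul_apply, smul_eq_mul]
        ring
      rw [Finset.sum_congr rfl fun a _ => h1 a, Finset.sum_sub_distrib, ← Finset.mul_sum,
        ← Finset.mul_sum, hpisum, Matrix.transpose_apply, hKpi]
      ring
    rw [Finset.sum_congr rfl fun s _ => hs s]
    exact (congrFun hKw s').symm
  · rw [hratio, hpi]; exact hfoc2 s a
end

section
/- Let S and A be nonempty finite sets with |A| ≥ 2, γ ∈ (0,1), for each a ∈ A let P_a be an |S|×|S| row-stochastic matrix and K_a = I − γP_a, let r ∈ ℝ^{S×A} with all entries nonnegative, and τ > 0. Suppose v ∈ ℝ^S and u ∈ ℝ^{S×A} has all entries strictly positive and τ log(u_{sa}/ũ_s) = r_{sa} − Σ_{s'} K_{ass'} v_{s'} for all (s,a) ∈ S×A. Then v_s > 0 for every s ∈ S. -/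
/-!
The proof is a minimum principle. Since there are at least two actions, every policy probability
`u s a / ∑ b, u s b` is strictly below `1`, so its logarithm is negative and the hypothesis gives
`v s > r s a + γ * (P a v) s ≥ γ * (P a v) s` for each action `a`. At a state `m` minimizing `v`, the average
`(P a v) m` is at least `v m`, hence `(1 - γ) * v m > 0`. A single action suffices, so neither
averaging over the policy nor inverting `I - γ P_π` is needed.
-/

open Matrix

/-- If |A| ≥ 2, r is entrywise nonnegative, u entrywise positive, and
τ log(u_{sa}/ũ_s) = r_{sa} − Σ_{s'} K_{ass'} v_{s'} for all (s,a) (K_a = I − γP_a,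
P_a row-stochastic, 0 < γ < 1), then v is entrywise strictly positive. -/
theorem statement_19 (S A : Type*) [Fintype S] [Fintype A] [Nonempty S]
    [DecidableEq S]
    (hA : 2 ≤ Fintype.card A)
    (γ τ : ℝ) (hγ0 : 0 < γ) (hγ1 : γ < 1) (hτ : 0 < τ)
    (P : A → Matrix S S ℝ) (hP : ∀ a s s', 0 ≤ P a s s') (hrow : ∀ a s, ∑ s', P a s s' = 1)
    (K : A → Matrix S S ℝ) (hK : ∀ a, K a = 1 - γ • P a)
    (r : S → A → ℝ) (hr : ∀ s a, 0 ≤ r s a)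
    (v : S → ℝ) (u : S → A → ℝ) (hu : ∀ s a, 0 < u s a)
    (hfoc : ∀ s a, τ * Real.log (u s a / ∑ b, u s b) = r s a - ∑ s', K a s s' * v s') :
    ∀ s, 0 < v s := by
  -- It suffices to treat a state minimizing `v`.
  obtain ⟨m, hm⟩ := Finite.exists_min v
  suffices h : 0 < v m from fun s => h.trans_le (hm s)
  have : Nontrivial A := Fintype.one_lt_card_iff_nontrivial.mp hA
  obtain ⟨a, b, hab⟩ := exists_pair_ne A
  have hlt : u m a < ∑ c, u m c :=
    Finset.single_lt_sum hab.symm (Finset.mem_univ a) (Finset.mem_univ b) (hu m b)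
      fun c _ _ => (hu m c).le
  have hsum : 0 < ∑ c, u m c := (hu m a).trans hlt
  have hlog : τ * Real.log (u m a / ∑ c, u m c) < 0 :=
    mul_neg_of_pos_of_neg hτ
      (Real.log_neg (div_pos (hu m a) hsum) ((div_lt_one hsum).mpr hlt))
  have hKv : ∑ s', K a m s' * v s' = v m - γ * ∑ s', P a m s' * v s' := by
    simp [hK, Matrix.one_apply, sub_mul, Finset.sum_sub_distrib, Finset.mul_sum, mul_assoc]
  have hPv : v m ≤ ∑ s', P a m s' * v s' :=
    calc v m = ∑ s', P a m s' * v m := by rw [← Finset.sum_mul, hrow, one_mul]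
      _ ≤ ∑ s', P a m s' * v s' :=
        Finset.sum_le_sum fun s' _ => mul_le_mul_of_nonneg_left (hm s') (hP a m s')
  rw [hfoc, hKv] at hlog
  have hγ := mul_le_mul_of_nonneg_left hPv hγ0.le
  have hr' := hr m a
  have hmul : 0 < (1 - γ) * v m := by linarith
  exact pos_of_mul_pos_right hmul (sub_pos.mpr hγ1).le
end
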